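/- arXiv:1104.2806 — 5 statements merged into one kernel-verified Lean document; each statement's English description precedes it below -/
import Mathlib

section
/- Let T be a bounded linear operator on C(K,X). Then T is a multiplication operator (there exists a₀ ∈ C(K) with T(f) = a₀•f for all f ∈ C(K,X)) if and only if both of the following hold: (iia) for every x ∈ X, T maps the cyclic subspace V_x generated by x⃗ into itself; and (iib) for every x ∈ X, every a ∈ C(K) and every g ∈ V_x, T(a•g) = a•T(g). -/
/-- The cyclic subspace of `C(K,X)` generated by the constant function `x⃗`. -/
noncomputable def cyclicC (K : Type*) [TopologicalSpace K] [CompactSpace K]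
    {X : Type*} [NormedAddCommGroup X] [NormedSpace ℝ X] (x : X) : Set C(K, X) :=
  closure {g : C(K, X) | ∃ a : C(K, ℝ), g = a • ContinuousMap.const K x}

/-!
Members of `V_x` take values in the line `ℝ x`, so invariance of the `V_x` forces each linear map
`x ↦ (T x⃗)(t)` to preserve all lines of `X`. Such a map is a scalar `a₀(t)`, and `a₀` is continuous
because `a₀(t) = φ((T x₀⃗)(t))` for a functional `φ` with `φ(x₀) = 1`. Commutation gives
`T (a • x⃗) = a₀ • (a • x⃗)`, and the functions `a • x⃗` span a dense subspace of `C(K, X)`: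
to approximate `f`, pull back along `f` a partition of unity on `X` subordinate to small balls that
cover `f(K)`.
-/

open ContinuousMap

section PreservingLines

theorem exists_eq_smul_of_forall_mem_span_singleton {R V : Type*} [CommRing R] [IsDomain R]
    [AddCommGroup V] [Module R V] [Module.Free R V] (f : V →ₗ[R] V)
    (hf : ∀ v, f v ∈ Submodule.span R {v}) : ∃ c : R, ∀ v, f v = c • v := by
  have not_linearIndependent (v : V) : ¬LinearIndependent R ![v, f v] := by
    obtain ⟨c, hc⟩ := Submodule.mem_span_singleton.1 (hf v)
    intro hv
    have := LinearIndependent.pair_iff.1 hv c (-1) (by simp [hc])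
    simp at this
  obtain ⟨c, rfl⟩ := LinearMap.exists_eq_smul_id_of_forall_notLinearIndependent
    not_linearIndependent
  exact ⟨c, fun v => rfl⟩

theorem exists_eq_smul_const_of_forall_mem_span_singleton {K 𝕜 X : Type*} [TopologicalSpace K]
    [Field 𝕜] [TopologicalSpace 𝕜] [IsTopologicalRing 𝕜] [AddCommGroup X] [TopologicalSpace X]
    [ContinuousAdd X] [Module 𝕜 X] [ContinuousSMul 𝕜 X] [SeparatingDual 𝕜 X]
    (L : X →ₗ[𝕜] C(K, X)) (hL : ∀ x t, L x t ∈ Submodule.span 𝕜 {x}) :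
    ∃ a : C(K, 𝕜), ∀ x, L x = a • const K x := by
  cases subsingleton_or_nontrivial X with
  | inl _ => exact ⟨const K 0, fun x => Subsingleton.elim _ _⟩
  | inr _ =>
    obtain ⟨x₀, hx₀⟩ := exists_ne (0 : X)
    obtain ⟨φ, hφ⟩ := SeparatingDual.exists_eq_one (R := 𝕜) hx₀
    refine ⟨⟨fun t => φ (L x₀ t), by fun_prop⟩, fun x => ContinuousMap.ext fun t => ?_⟩
    obtain ⟨c, hc⟩ : ∃ c : 𝕜, ∀ y, L y t = c • y :=
      exists_eq_smul_of_forall_mem_span_singleton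
        ((evalCLM 𝕜 t : C(K, X) →L[𝕜] X).toLinearMap ∘ₗ L) (hL · t)
    simp [hc, hφ]

end PreservingLines

section Density

variable {X : Type*} [NormedAddCommGroup X] [NormedSpace ℝ X]

theorem exists_forall_dist_sum_smul_lt_of_isCompact {s : Set X} (hs : IsCompact s) {ε : ℝ}
    (hε : 0 < ε) :
    ∃ (c : Finset X) (ρ : c → C(X, ℝ)), ∀ y ∈ s, dist y (∑ i, ρ i y • (i : X)) < ε := by
  obtain ⟨c, -, hc, hsc⟩ := hs.finite_cover_balls hε
  lift c to Finset X using hc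
  obtain ⟨ρ, hρ⟩ := PartitionOfUnity.exists_isSubordinate_of_locallyFinite hs.isClosed
    (fun i : c => Metric.ball (i : X) ε) (fun _ => Metric.isOpen_ball)
    (locallyFinite_of_finite _) (by simpa [Set.iUnion_subtype] using hsc)
  refine ⟨c, fun i => ρ i, fun y hy => ?_⟩
  have close_of_ne_zero (i : c) (hi : ρ i y ≠ 0) : (i : X) ∈ Metric.ball y ε :=
    Metric.mem_ball_comm.1 (hρ i (subset_closure hi))
  have sum_mem := ρ.finsum_smul_mem_convex (g := fun i _ => (i : X)) hy close_of_ne_zero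
    (convex_ball y ε)
  rwa [finsum_eq_sum_of_fintype, Metric.mem_ball'] at sum_mem

theorem dense_span_smul_const (K : Type*) [TopologicalSpace K] :
    Dense (Submodule.span ℝ {g : C(K, X) | ∃ (a : C(K, ℝ)) (x : X), g = a • const K x} :
      Set C(K, X)) := by
  intro f
  refine (mem_closure_iff_nhds_basis (nhds_basis_uniformity'
    Metric.uniformity_basis_dist.compactConvergenceUniformity)).2 ?_
  rintro ⟨Q, ε⟩ ⟨hQ, hε⟩
  obtain ⟨c, ρ, hρ⟩ :=
    exists_forall_dist_sum_smul_lt_of_isCompact (hQ.image f.continuous) hε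
  refine ⟨∑ i, (ρ i).comp f • const K (i : X),
    sum_mem fun i _ => Submodule.subset_span ⟨_, _, rfl⟩, fun t ht => ?_⟩
  simpa [ContinuousMap.sum_apply] using hρ (f t) (Set.mem_image_of_mem f ht)

theorem eq_smul_of_forall_smul_const {K : Type*} [TopologicalSpace K]
    (T : C(K, X) →L[ℝ] C(K, X)) (a₀ : C(K, ℝ))
    (hT : ∀ (a : C(K, ℝ)) (x : X), T (a • const K x) = a₀ • a • const K x) (f : C(K, X)) :
    T f = a₀ • f := by
  ext t
  have eval_comp_eq : (evalCLM ℝ t).comp T = a₀ t • evalCLM ℝ t := by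
    refine ContinuousLinearMap.ext_on (dense_span_smul_const K) ?_
    rintro _ ⟨a, x, rfl⟩
    simp [hT]
  exact DFunLike.congr_fun eval_comp_eq f

end Density

section CyclicSubspace

variable {K X : Type*} [TopologicalSpace K] [CompactSpace K] [NormedAddCommGroup X]
  [NormedSpace ℝ X]

theorem const_mem_cyclicC (x : X) : const K x ∈ cyclicC K x :=
  subset_closure ⟨1, (one_smul _ _).symm⟩

theorem apply_mem_span_singleton_of_mem_cyclicC {x : X} {g : C(K, X)} (hg : g ∈ cyclicC K x)
    (t : K) : g t ∈ Submodule.span ℝ {x} := by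
  have isClosed_line : IsClosed (Submodule.span ℝ {x} : Set X) :=
    Submodule.closed_of_finiteDimensional _
  refine closure_minimal ?_ (isClosed_line.preimage (continuous_eval_const t)) hg
  rintro _ ⟨a, rfl⟩
  exact Submodule.mem_span_singleton.2 ⟨a t, rfl⟩

theorem mapsTo_cyclicC_of_eq_smul {T : C(K, X) →L[ℝ] C(K, X)} {a₀ : C(K, ℝ)}
    (hT : ∀ f, T f = a₀ • f) (x : X) : Set.MapsTo T (cyclicC K x) (cyclicC K x) := by
  refine Set.MapsTo.closure ?_ T.continuous
  rintro _ ⟨a, rfl⟩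
  exact ⟨a₀ * a, by rw [hT, mul_smul]⟩

theorem exists_eq_smul_of_const_mem_cyclicC (T : C(K, X) →L[ℝ] C(K, X))
    (hinv : ∀ x, T (const K x) ∈ cyclicC K x)
    (hcomm : ∀ (a : C(K, ℝ)) (x : X), T (a • const K x) = a • T (const K x)) :
    ∃ a₀ : C(K, ℝ), ∀ f, T f = a₀ • f := by
  let constLinear : X →ₗ[ℝ] C(K, X) :=
    { toFun := const K, map_add' := fun _ _ => rfl, map_smul' := fun _ _ => rfl }
  obtain ⟨a₀, ha₀⟩ : ∃ a₀ : C(K, ℝ), ∀ x, T (const K x) = a₀ • const K x :=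
    exists_eq_smul_const_of_forall_mem_span_singleton (T.toLinearMap ∘ₗ constLinear)
      fun x => apply_mem_span_singleton_of_mem_cyclicC (hinv x)
  refine ⟨a₀, eq_smul_of_forall_smul_const T a₀ fun a x => ?_⟩
  rw [hcomm, ha₀, smul_comm]

end CyclicSubspace

theorem multiplication_iff_invariant_and_commutes_general {K X : Type*} [TopologicalSpace K]
    [CompactSpace K] [NormedAddCommGroup X] [NormedSpace ℝ X] (T : C(K, X) →L[ℝ] C(K, X)) :
    (∃ a₀ : C(K, ℝ), ∀ f : C(K, X), T f = a₀ • f) ↔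
      ((∀ x : X, Set.MapsTo T (cyclicC K x) (cyclicC K x)) ∧
       (∀ (x : X) (a : C(K, ℝ)) (g : C(K, X)), g ∈ cyclicC K x →
          T (a • g) = a • T g)) := by
  constructor
  · rintro ⟨a₀, hT⟩
    exact ⟨mapsTo_cyclicC_of_eq_smul hT, fun x a g _ => by rw [hT, hT, smul_comm]⟩
  · rintro ⟨hinv, hcomm⟩
    exact exists_eq_smul_of_const_mem_cyclicC T (fun x => hinv x (const_mem_cyclicC x))
      fun a x => hcomm x a _ (const_mem_cyclicC x)

/-- A bounded linear operator `T` on `C(K,X)` is a multiplication operator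
iff (iia) `T` leaves each cyclic subspace `V_x` invariant, and (iib) `T` commutes with
multiplication by `C(K)` on each `V_x`. -/
theorem multiplication_iff_invariant_and_commutes (K : Type*) [TopologicalSpace K]
    [CompactSpace K] [T2Space K] (X : Type*) [NormedAddCommGroup X] [NormedSpace ℝ X]
    [CompleteSpace X] (T : C(K, X) →L[ℝ] C(K, X)) :
    (∃ a₀ : C(K, ℝ), ∀ f : C(K, X), T f = a₀ • f) ↔
      ((∀ x : X, Set.MapsTo T (cyclicC K x) (cyclicC K x)) ∧
       (∀ (x : X) (a : C(K, ℝ)) (g : C(K, X)), g ∈ cyclicC K x →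
          T (a • g) = a • T g)) :=
  multiplication_iff_invariant_and_commutes_general T
end

section
/- Let p ∈ [1,∞], let f ∈ Lp(μ,X), and let 𝒜 be a (possibly uncountable) family of measurable subsets of Ω such that f = 0 μ-almost everywhere on each A ∈ 𝒜. Let B ⊆ Ω be a measurable set such that every measurable subset of B of positive measure has an intersection of positive measure with some member of 𝒜. Then f = 0 μ-almost everywhere on B. (This expresses that Lp(μ,X) is a Kaplansky L∞(μ)-module: the annihilator of each f in L∞(μ) is a band.) -/
open MeasureTheory ENNReal

section

variable {Ω : Type*} [MeasurableSpace Ω] {μ : Measure Ω} {𝒜 : Set (Set Ω)}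

theorem measure_eq_zero_of_forall_subset_exists_inter_pos {N : Set Ω} (hN : NullMeasurableSet N μ)
    (hnull : ∀ A ∈ 𝒜, μ (N ∩ A) = 0)
    (hmeet : ∀ s : Set Ω, MeasurableSet s → s ⊆ N → 0 < μ s → ∃ A ∈ 𝒜, 0 < μ (s ∩ A)) :
    μ N = 0 := by
  obtain ⟨s, hsN, hs, hs_ae⟩ := hN.exists_measurable_subset_ae_eq
  rw [← measure_congr hs_ae]
  by_contra hs_ne
  obtain ⟨A, hA, hpos⟩ := hmeet s hs hsN (pos_iff_ne_zero.mpr hs_ne)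
  exact hpos.ne' (measure_mono_null (Set.inter_subset_inter_left A hsN) (hnull A hA))

theorem ae_zero_on_of_family_general {X : Type*} [TopologicalSpace X]
    [TopologicalSpace.MetrizableSpace X] [Zero X] {f : Ω → X} (hfm : AEStronglyMeasurable f μ)
    (hf : ∀ A ∈ 𝒜, ∀ᵐ t ∂μ, t ∈ A → f t = 0)
    {B : Set Ω} (hB : NullMeasurableSet B μ)
    (hmeet : ∀ s : Set Ω, MeasurableSet s → s ⊆ B → 0 < μ s → ∃ A ∈ 𝒜, 0 < μ (s ∩ A)) :
    ∀ᵐ t ∂μ, t ∈ B → f t = 0 := by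
  have hN : NullMeasurableSet (B ∩ Function.support f) μ :=
    hB.inter hfm.nullMeasurableSet_support
  have hnull : ∀ A ∈ 𝒜, μ (B ∩ Function.support f ∩ A) = 0 := by
    intro A hA
    refine measure_mono_null ?_ (ae_iff.mp (hf A hA))
    exact fun t ⟨⟨_, htf⟩, htA⟩ h ↦ htf (h htA)
  have hzero : μ (B ∩ Function.support f) = 0 :=
    measure_eq_zero_of_forall_subset_exists_inter_pos hN hnull fun s hs hsN ↦
      hmeet s hs (hsN.trans Set.inter_subset_left)
  exact measure_mono_null (fun _ ht ↦ Classical.not_imp.mp ht) hzero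

end

/-- (`Lp(μ,X)` is a Kaplansky `L∞(μ)`-module.)  If `f ∈ Lp(μ,X)` vanishes
a.e. on every member of a family `𝒜` of measurable sets, and `B` is a measurable set
such that every measurable subset of `B` of positive measure meets some member of `𝒜`
in positive measure, then `f` vanishes a.e. on `B`. -/
theorem ae_zero_on_of_family {Ω : Type*} [MeasurableSpace Ω] (μ : Measure Ω)
    [IsProbabilityMeasure μ] [μ.IsComplete]
    (X : Type*) [NormedAddCommGroup X] [NormedSpace ℝ X] [CompleteSpace X]
    (p : ℝ≥0∞) [Fact (1 ≤ p)] (f : Lp X p μ)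
    (𝒜 : Set (Set Ω)) (h𝒜 : ∀ A ∈ 𝒜, MeasurableSet A)
    (hf : ∀ A ∈ 𝒜, ∀ᵐ t ∂μ, t ∈ A → f t = 0)
    (B : Set Ω) (hB : MeasurableSet B)
    (hmeet : ∀ s : Set Ω, MeasurableSet s → s ⊆ B → 0 < μ s → ∃ A ∈ 𝒜, 0 < μ (s ∩ A)) :
    ∀ᵐ t ∂μ, t ∈ B → f t = 0 := by
  exact ae_zero_on_of_family_general (Lp.aestronglyMeasurable f) hf hB.nullMeasurableSet hmeet
end

section
/- Let T be a bounded linear operator on C(K,X) satisfying the functional equation T((a·⟨f,x*⟩)•x⃗) = (a·⟨T(f),x*⟩)•x⃗ for all a ∈ C(K), f ∈ C(K,X), x ∈ X and x* ∈ X*. Then: (iia) for every x ∈ X, T maps the cyclic subspace V_x into itself; and (iib) for every x ∈ X, every a ∈ C(K) and every g ∈ V_x, T(a•g) = a•T(g). -/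
/-- For `f ∈ C(K,X)` and `x* ∈ X*`, the scalar function `⟨f, x*⟩ : t ↦ x*(f t)` in `C(K)`. -/
noncomputable def pairC {K : Type*} [TopologicalSpace K] {X : Type*} [NormedAddCommGroup X]
    [NormedSpace ℝ X] (f : C(K, X)) (xs : X →L[ℝ] ℝ) : C(K, ℝ) :=
  ⟨fun t => xs (f t), xs.continuous.comp f.continuous⟩

/-!
The functional equation forces `T` to be multiplication by a single scalar function. Fix `x ≠ 0`
and, by Hahn–Banach, a functional `y*` with `y* x = 1`, and put `h = ⟨T x⃗, y*⟩`. Evaluating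
`T (⟨f, x*⟩ • x⃗)` through the equation for the pair `(f, x*)` gives `⟨T f, x*⟩ • x⃗`, while
evaluating it through the equation for `(x⃗, y*)` gives `(⟨f, x*⟩ * h) • x⃗`. Since functionals
separate points, `T f = h • f`, and multiplication by `h` commutes with `C(K)` on all of `C(K,X)`
and preserves each `V_x`.
-/

section Multiplier

open ContinuousMap

variable {K X : Type*} [TopologicalSpace K] [AddCommGroup X] [TopologicalSpace X]

theorem eq_smul_of_forall_dual_comp_eq_mul {R : Type*} [CommRing R] [TopologicalSpace R]
    [ContinuousMul R] [Module R X] [ContinuousSMul R X] [SeparatingDual R X]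
    {h : C(K, R)} {f g : C(K, X)}
    (hfg : ∀ φ : StrongDual R X, (φ : C(X, R)).comp g = (φ : C(X, R)).comp f * h) :
    g = h • f := by
  ext t
  refine (SeparatingDual.eq_iff_forall_dual_eq (R := R)).2 fun φ ↦ ?_
  calc φ (g t) = φ (f t) * h t := DFunLike.congr_fun (hfg φ) t
    _ = φ ((h • f) t) := by rw [smul_apply', map_smul, smul_eq_mul, mul_comm]

theorem continuousMap_smul_const_injective {R : Type*} [Ring R] [IsDomain R] [TopologicalSpace R]
    [Module R X] [Module.IsTorsionFree R X] [ContinuousSMul R X] {x : X} (hx : x ≠ 0) :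
    Function.Injective fun a : C(K, R) ↦ a • const K x := fun _ _ hab ↦
  ContinuousMap.ext fun t ↦ smul_left_injective R hx (DFunLike.congr_fun hab t)

theorem exists_eq_smul_of_map_mul_comp_smul_const {𝕜 : Type*} [Field 𝕜]
    [TopologicalSpace 𝕜] [IsTopologicalRing 𝕜] [Module 𝕜 X] [ContinuousSMul 𝕜 X]
    [SeparatingDual 𝕜 X] {x : X} (hx : x ≠ 0) {T : C(K, X) → C(K, X)}
    (hT : ∀ (a : C(K, 𝕜)) (f : C(K, X)) (φ : StrongDual 𝕜 X),
      T ((a * (φ : C(X, 𝕜)).comp f) • const K x) =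
        (a * (φ : C(X, 𝕜)).comp (T f)) • const K x) :
    ∃ h : C(K, 𝕜), ∀ f, T f = h • f := by
  obtain ⟨ψ, hψ⟩ := SeparatingDual.exists_eq_one (R := 𝕜) hx
  have comp_const_eq_one : (ψ : C(X, 𝕜)).comp (const K x) = 1 := ContinuousMap.ext fun _ ↦ hψ
  refine ⟨(ψ : C(X, 𝕜)).comp (T (const K x)), fun f ↦
    eq_smul_of_forall_dual_comp_eq_mul fun φ ↦ continuousMap_smul_const_injective hx ?_⟩
  calc (φ : C(X, 𝕜)).comp (T f) • const K x
      = T ((φ : C(X, 𝕜)).comp f • const K x) := by simpa only [one_mul] using (hT 1 f φ).symm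
    _ = ((φ : C(X, 𝕜)).comp f * (ψ : C(X, 𝕜)).comp (T (const K x))) • const K x := by
      simpa only [comp_const_eq_one, mul_one] using hT ((φ : C(X, 𝕜)).comp f) (const K x) ψ

end Multiplier

instance isBoundedSMul_continuousMap {K R E : Type*} [TopologicalSpace K] [CompactSpace K]
    [SeminormedRing R] [SeminormedAddCommGroup E] [Module R E] [IsBoundedSMul R E] :
    IsBoundedSMul C(K, R) C(K, E) :=
  .of_norm_smul_le fun a f ↦ (ContinuousMap.norm_le _ (by positivity)).2 fun t ↦
    calc ‖a t • f t‖ ≤ ‖a t‖ * ‖f t‖ := norm_smul_le _ _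
      _ ≤ ‖a‖ * ‖f‖ := by gcongr <;> exact ContinuousMap.norm_coe_le_norm _ t

section CyclicSubspace

variable {K X : Type*} [TopologicalSpace K] [NormedAddCommGroup X] [NormedSpace ℝ X]

theorem smul_mem_cyclicC [CompactSpace K] {x : X} {g : C(K, X)} (h : C(K, ℝ))
    (hg : g ∈ cyclicC K x) : h • g ∈ cyclicC K x := by
  refine map_mem_closure (continuous_const_smul h) hg ?_
  rintro _ ⟨a, rfl⟩
  exact ⟨h * a, smul_smul h a _⟩

theorem exists_eq_smul_of_map_mul_pairC_smul_const {T : C(K, X) → C(K, X)}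
    (hT : ∀ (a : C(K, ℝ)) (f : C(K, X)) (x : X) (xs : X →L[ℝ] ℝ),
      T ((a * pairC f xs) • ContinuousMap.const K x) =
        (a * pairC (T f) xs) • ContinuousMap.const K x) :
    ∃ h : C(K, ℝ), ∀ f, T f = h • f := by
  rcases subsingleton_or_nontrivial X with _ | _
  · exact ⟨0, fun f ↦ ContinuousMap.ext fun _ ↦ Subsingleton.elim _ _⟩
  · obtain ⟨x, hx⟩ := exists_ne (0 : X)
    exact exists_eq_smul_of_map_mul_comp_smul_const hx fun a f ↦ hT a f x

end CyclicSubspace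

theorem functional_equation_implies_invariant_and_commutes_general {K X : Type*}
    [TopologicalSpace K] [CompactSpace K] [NormedAddCommGroup X] [NormedSpace ℝ X]
    {T : C(K, X) → C(K, X)}
    (hT : ∀ (a : C(K, ℝ)) (f : C(K, X)) (x : X) (xs : X →L[ℝ] ℝ),
      T ((a * pairC f xs) • ContinuousMap.const K x) =
        (a * pairC (T f) xs) • ContinuousMap.const K x) :
    (∀ x : X, Set.MapsTo T (cyclicC K x) (cyclicC K x)) ∧
    (∀ (a : C(K, ℝ)) (g : C(K, X)), T (a • g) = a • T g) := by
  obtain ⟨h, T_eq_smul⟩ := exists_eq_smul_of_map_mul_pairC_smul_const hT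
  refine ⟨fun x g hg ↦ ?_, fun a g ↦ ?_⟩
  · exact T_eq_smul g ▸ smul_mem_cyclicC h hg
  · rw [T_eq_smul, T_eq_smul, smul_comm]

/-- If a bounded linear operator `T` on `C(K,X)` satisfies the functional
equation `T((a·⟨f,x*⟩) • x⃗) = (a·⟨T f, x*⟩) • x⃗`, then (iia) `T` leaves each cyclic
subspace `V_x` invariant, and (iib) `T` commutes with `C(K)` on each `V_x`. -/
theorem functional_equation_implies_invariant_and_commutes (K : Type*) [TopologicalSpace K]
    [CompactSpace K] [T2Space K] (X : Type*) [NormedAddCommGroup X] [NormedSpace ℝ X]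
    [CompleteSpace X] (T : C(K, X) →L[ℝ] C(K, X))
    (hT : ∀ (a : C(K, ℝ)) (f : C(K, X)) (x : X) (xs : X →L[ℝ] ℝ),
      T ((a * pairC f xs) • ContinuousMap.const K x) =
        (a * pairC (T f) xs) • ContinuousMap.const K x) :
    (∀ x : X, Set.MapsTo T (cyclicC K x) (cyclicC K x)) ∧
    (∀ (x : X) (a : C(K, ℝ)) (g : C(K, X)), g ∈ cyclicC K x → T (a • g) = a • T g) := by
  obtain ⟨invariant, commutes⟩ := functional_equation_implies_invariant_and_commutes_general hT
  exact ⟨invariant, fun _ a g _ ↦ commutes a g⟩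
end

section
/- Let T be a bounded linear operator on C(K,X). Then T is a multiplication operator (there exists a₀ ∈ C(K) with T(f) = a₀•f for all f ∈ C(K,X)) if and only if T satisfies the functional equation T((a·⟨f,x*⟩)•x⃗) = (a·⟨T(f),x*⟩)•x⃗ for all a ∈ C(K), f ∈ C(K,X), x ∈ X and x* ∈ X*. -/
/-!
Fix `x ∈ X` and a functional `g` with `g x = 1`. In the functional equation the scalar function
`⟨f, x*⟩` arises in two ways: as the pairing of `f` with `x*` (taking `a = 1`), and as the
coefficient `a = ⟨f, x*⟩` times `⟨x⃗, g⟩ = 1`. Comparing the two values of `T (⟨f, x*⟩ • x⃗)` gives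
`⟨T f, x*⟩ = ⟨T x⃗, g⟩ · ⟨f, x*⟩`, and since functionals separate points, `T` is multiplication by
`⟨T x⃗, g⟩`.
-/

section CommSemiring

variable {K R X : Type*} [TopologicalSpace K] [CommSemiring R] [TopologicalSpace R]
  [AddCommMonoid X] [TopologicalSpace X] [Module R X]

/-- The pairing `⟨f, φ⟩ : t ↦ φ (f t)` of a continuous function with a continuous linear functional
on a topological module. For real normed spaces it is definitionally `pairC f φ`. -/
def pointwisePairing (f : C(K, X)) (φ : X →L[R] R) : C(K, R) :=
  (φ : C(X, R)).comp f

theorem pointwisePairing_apply (f : C(K, X)) (φ : X →L[R] R) (t : K) :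
    pointwisePairing f φ t = φ (f t) :=
  rfl

theorem pointwisePairing_const_eq_one {x : X} {φ : X →L[R] R} (hφx : φ x = 1) :
    pointwisePairing (ContinuousMap.const K x) φ = 1 :=
  ContinuousMap.ext fun _ => hφx

variable [ContinuousMul R] [ContinuousSMul R X]

theorem pointwisePairing_smul (a : C(K, R)) (f : C(K, X)) (φ : X →L[R] R) :
    pointwisePairing (a • f) φ = a * pointwisePairing f φ := by
  ext t
  exact map_smul φ (a t) (f t)

theorem pointwisePairing_smul_const_eq_self {x : X} {φ : X →L[R] R} (hφx : φ x = 1)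
    (a : C(K, R)) : pointwisePairing (a • ContinuousMap.const K x) φ = a := by
  rw [pointwisePairing_smul, pointwisePairing_const_eq_one hφx, mul_one]

variable (R) in
/-- The functional equation `T ((a · ⟨f, φ⟩) • x⃗) = (a · ⟨T f, φ⟩) • x⃗` that characterises the
multiplication operators among all self-maps `T` of `C(K, X)`. -/
def PairingEquation (T : C(K, X) → C(K, X)) : Prop :=
  ∀ (a : C(K, R)) (f : C(K, X)) (x : X) (φ : X →L[R] R),
    T ((a * pointwisePairing f φ) • ContinuousMap.const K x) =
      (a * pointwisePairing (T f) φ) • ContinuousMap.const K x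

theorem pairingEquation_smul (a₀ : C(K, R)) :
    PairingEquation R fun f : C(K, X) => a₀ • f := by
  intro a f x φ
  ext t
  simp only [pointwisePairing_smul, ContinuousMap.smul_apply', ContinuousMap.mul_apply, smul_smul,
    mul_left_comm]

theorem PairingEquation.pointwisePairing_map {T : C(K, X) → C(K, X)} (hT : PairingEquation R T)
    {x : X} {g : X →L[R] R} (hgx : g x = 1) (f : C(K, X)) (φ : X →L[R] R) :
    pointwisePairing (T f) φ =
      pointwisePairing (T (ContinuousMap.const K x)) g * pointwisePairing f φ := by
  have map_via_pairing : T (pointwisePairing f φ • ContinuousMap.const K x) =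
      pointwisePairing (T f) φ • ContinuousMap.const K x := by
    simpa only [one_mul] using hT 1 f x φ
  have map_via_coefficient : T (pointwisePairing f φ • ContinuousMap.const K x) =
      (pointwisePairing f φ * pointwisePairing (T (ContinuousMap.const K x)) g) •
        ContinuousMap.const K x := by
    simpa only [pointwisePairing_const_eq_one hgx, mul_one] using
      hT (pointwisePairing f φ) (ContinuousMap.const K x) x g
  calc
    pointwisePairing (T f) φ
      = pointwisePairing (pointwisePairing (T f) φ • ContinuousMap.const K x) g :=
        (pointwisePairing_smul_const_eq_self hgx _).symm
    _ = pointwisePairing f φ * pointwisePairing (T (ContinuousMap.const K x)) g := by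
        rw [← map_via_pairing, map_via_coefficient, pointwisePairing_smul_const_eq_self hgx]
    _ = pointwisePairing (T (ContinuousMap.const K x)) g * pointwisePairing f φ :=
        mul_comm _ _

end CommSemiring

section CommRing

variable {K R X : Type*} [TopologicalSpace K] [CommRing R] [TopologicalSpace R]
  [AddCommGroup X] [TopologicalSpace X] [Module R X] [SeparatingDual R X]

theorem eq_of_forall_pointwisePairing_eq {f₁ f₂ : C(K, X)}
    (h : ∀ φ : X →L[R] R, pointwisePairing f₁ φ = pointwisePairing f₂ φ) : f₁ = f₂ := by
  ext t
  refine (SeparatingDual.eq_iff_forall_dual_eq (R := R)).2 fun φ => ?_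
  simpa only [pointwisePairing_apply] using DFunLike.congr_fun (h φ) t

theorem PairingEquation.eq_smul [ContinuousMul R] [ContinuousSMul R X] {T : C(K, X) → C(K, X)}
    (hT : PairingEquation R T) {x : X} {g : X →L[R] R} (hgx : g x = 1) (f : C(K, X)) :
    T f = pointwisePairing (T (ContinuousMap.const K x)) g • f :=
  eq_of_forall_pointwisePairing_eq (R := R) fun φ => by
    rw [hT.pointwisePairing_map hgx, pointwisePairing_smul]

end CommRing

section Field

variable {K R X : Type*} [TopologicalSpace K] [Field R] [TopologicalSpace R] [AddCommGroup X]
  [TopologicalSpace X] [Module R X] [SeparatingDual R X]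

variable (R X) in
theorem exists_dual_apply_eq_one [Nontrivial X] : ∃ (x : X) (g : X →L[R] R), g x = 1 := by
  obtain ⟨x, hx⟩ := exists_ne (0 : X)
  obtain ⟨g, hgx⟩ := SeparatingDual.exists_ne_zero (R := R) hx
  exact ⟨(g x)⁻¹ • x, g, by rw [map_smul, smul_eq_mul, inv_mul_cancel₀ hgx]⟩

variable [ContinuousMul R] [ContinuousSMul R X]

theorem PairingEquation.exists_eq_smul {T : C(K, X) → C(K, X)} (hT : PairingEquation R T) :
    ∃ a₀ : C(K, R), ∀ f : C(K, X), T f = a₀ • f := by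
  rcases subsingleton_or_nontrivial X with _ | _
  · exact ⟨0, fun f => Subsingleton.elim _ _⟩
  · obtain ⟨x, g, hgx⟩ := exists_dual_apply_eq_one R X
    exact ⟨pointwisePairing (T (ContinuousMap.const K x)) g, hT.eq_smul hgx⟩

theorem multiplication_iff_functional_equation_general (T : C(K, X) → C(K, X)) :
    (∃ a₀ : C(K, R), ∀ f : C(K, X), T f = a₀ • f) ↔ PairingEquation R T := by
  refine ⟨?_, PairingEquation.exists_eq_smul⟩
  rintro ⟨a₀, hT⟩
  obtain rfl : T = fun f => a₀ • f := funext hT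
  exact pairingEquation_smul a₀

end Field

/-- A bounded linear operator `T` on `C(K,X)` is a multiplication operator
iff it satisfies the functional equation
`T((a·⟨f,x*⟩) • x⃗) = (a·⟨T f, x*⟩) • x⃗` for all `a ∈ C(K)`, `f ∈ C(K,X)`, `x ∈ X`,
`x* ∈ X*`. -/
theorem multiplication_iff_functional_equation (K : Type*) [TopologicalSpace K]
    [CompactSpace K] [T2Space K] (X : Type*) [NormedAddCommGroup X] [NormedSpace ℝ X]
    [CompleteSpace X] (T : C(K, X) →L[ℝ] C(K, X)) :
    (∃ a₀ : C(K, ℝ), ∀ f : C(K, X), T f = a₀ • f) ↔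
      (∀ (a : C(K, ℝ)) (f : C(K, X)) (x : X) (xs : X →L[ℝ] ℝ),
        T ((a * pairC f xs) • ContinuousMap.const K x) =
          (a * pairC (T f) xs) • ContinuousMap.const K x) :=
  multiplication_iff_functional_equation_general T
end

section
/- Suppose X is infinite-dimensional and there exists a sequence of pairwise disjoint measurable subsets of Ω, each of positive measure. Then there exists f ∈ L∞(μ,X) such that ‖f − g‖_{L∞(μ,X)} ≥ 1/4 for every simple function g (every measurable function with finite range); in particular, the simple functions are not dense in L∞(μ,X). -/
open MeasureTheory ENNReal

/-!
An infinite-dimensional space contains a bounded sequence `x` whose terms are at mutual distance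
at least `1`. Let `f` take the value `x n` on `A n`. By the triangle inequality a point lies within
distance less than `1 / 2` of at most one term of `x`, so a finite set stays at distance at least
`1 / 2` from some `x n`; a function with values in that set is then at distance at least `1 / 2`
from `f` on `A n`, which is not null.
-/

section Separated

variable {ι X : Type*} [Infinite ι] [PseudoMetricSpace X] {x : ι → X} {ε : ℝ}

theorem exists_forall_half_le_dist_of_pairwise_le_dist
    (hx : Pairwise fun i j => ε ≤ dist (x i) (x j)) {s : Set X} (hs : s.Finite) :
    ∃ i, ∀ y ∈ s, ε / 2 ≤ dist (x i) y := by
  by_contra! hnear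
  choose y hys hy using hnear
  obtain ⟨i, -, j, -, hij, hyij⟩ :=
    Set.infinite_univ.exists_ne_map_eq_of_mapsTo (fun i _ => hys i) hs
  have hclose : dist (x i) (x j) < ε :=
    calc dist (x i) (x j) ≤ dist (x i) (y i) + dist (x j) (y i) := dist_triangle_right _ _ _
      _ < ε / 2 + ε / 2 := add_lt_add (hy i) (hyij ▸ hy j)
      _ = ε := add_halves ε
  exact hclose.not_ge (hx hij)

end Separated

section Linfty

variable {Ω X : Type*} [MeasurableSpace Ω] {μ : Measure Ω} [NormedAddCommGroup X]

theorem ae_norm_le_norm_Linfty (f : Lp X ∞ μ) : ∀ᵐ ω ∂μ, ‖f ω‖ ≤ ‖f‖ := by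
  rw [Lp.norm_def, toReal_eLpNorm (Lp.aestronglyMeasurable f)]
  exact ae_le_lpNorm_exponent_top (Lp.memLp f)

theorem half_le_norm_sub_of_finite_range {ι : Type*} [Infinite ι] {x : ι → X} {ε : ℝ}
    (hx : Pairwise fun i j => ε ≤ dist (x i) (x j)) {f g : Lp X ∞ μ}
    (hf : ∀ i, ∃ᵐ ω ∂μ, f ω = x i) {g₀ : Ω → X} (hg₀ : (Set.range g₀).Finite)
    (hg : g =ᵐ[μ] g₀) : ε / 2 ≤ ‖f - g‖ := by
  obtain ⟨i, hi⟩ := exists_forall_half_le_dist_of_pairwise_le_dist hx hg₀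
  obtain ⟨ω, hfω, hgω, hsub, hnorm⟩ := ((hf i).and_eventually
    (hg.and ((Lp.coeFn_sub f g).and (ae_norm_le_norm_Linfty (f - g))))).exists
  calc ε / 2 ≤ dist (x i) (g₀ ω) := hi _ ⟨ω, rfl⟩
    _ = ‖(f - g) ω‖ := by rw [hsub, Pi.sub_apply, hfω, hgω, dist_eq_norm]
    _ ≤ ‖f - g‖ := hnorm

theorem exists_Linfty_ae_eq_const_on {ι : Type*} [Countable ι] {A : ι → Set Ω}
    (hmeas : ∀ i, MeasurableSet (A i)) (hdisj : Pairwise (Function.onFun Disjoint A))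
    {x : ι → X} {R : ℝ} (hxR : ∀ i, ‖x i‖ ≤ R) :
    ∃ f : Lp X ∞ μ, ∀ᵐ ω ∂μ, ∀ i, ω ∈ A i → f ω = x i := by
  rcases isEmpty_or_nonempty ι with _ | _
  · exact ⟨0, by simp⟩
  let _ : MeasurableSpace ι := ⊤
  obtain ⟨index, hindex_meas, hindex⟩ := exists_measurable_piecewise A hmeas (fun i _ => i)
    (fun _ => measurable_const) (hdisj.mono fun i j hij => by simp [hij.inter_eq])
  have hmem : MemLp (x ∘ index) ∞ μ := memLp_top_of_bound
    (StronglyMeasurable.of_discrete.comp_measurable hindex_meas).aestronglyMeasurable R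
    (.of_forall fun _ => hxR _)
  refine ⟨hmem.toLp, ?_⟩
  filter_upwards [hmem.coeFn_toLp] with ω hω i hi
  rw [hω, Function.comp_apply, hindex i hi]

end Linfty

theorem simple_functions_not_dense_Linfty_general {Ω : Type*} [MeasurableSpace Ω] (μ : Measure Ω)
    (𝕜 : Type*) [NontriviallyNormedField 𝕜] [CompleteSpace 𝕜]
    (X : Type*) [NormedAddCommGroup X] [NormedSpace 𝕜 X] (hX : ¬ FiniteDimensional 𝕜 X)
    (A : ℕ → Set Ω) (hmeas : ∀ n, MeasurableSet (A n))
    (hdisj : Pairwise (Function.onFun Disjoint A)) (hpos : ∀ n, 0 < μ (A n)) :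
    ∃ f : Lp X ∞ μ, ∀ g : Lp X ∞ μ,
      (∃ g₀ : Ω → X, (Set.range g₀).Finite ∧ ⇑g =ᵐ[μ] g₀) → (1 : ℝ) / 2 ≤ ‖f - g‖ := by
  obtain ⟨R, x, -, hxR, hx⟩ := exists_seq_norm_le_one_le_norm_sub hX
  simp only [← dist_eq_norm] at hx
  obtain ⟨f, hf⟩ := exists_Linfty_ae_eq_const_on (μ := μ) hmeas hdisj hxR
  have hfreq (n : ℕ) : ∃ᵐ ω ∂μ, f ω = x n :=
    ((frequently_ae_mem_iff.2 (hpos n).ne').and_eventually hf).mono fun ω hω => hω.2 n hω.1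
  exact ⟨f, fun g ⟨_, hg₀, hg⟩ => half_le_norm_sub_of_finite_range hx hfreq hg₀ hg⟩

/-- If `X` is infinite dimensional and `Ω` contains a sequence of pairwise
disjoint measurable sets of positive measure, then there is `f ∈ L∞(μ,X)` with
`‖f − g‖ ≥ 1/4` for every (class of a) finitely-valued measurable function `g`; in
particular the simple functions are not dense in `L∞(μ,X)`. -/
theorem simple_functions_not_dense_Linfty {Ω : Type*} [MeasurableSpace Ω] (μ : Measure Ω)
    [IsProbabilityMeasure μ] [μ.IsComplete]
    (X : Type*) [NormedAddCommGroup X] [NormedSpace ℝ X] [CompleteSpace X]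
    (hX : ¬ FiniteDimensional ℝ X)
    (A : ℕ → Set Ω) (hmeas : ∀ n, MeasurableSet (A n))
    (hdisj : Pairwise (Function.onFun Disjoint A)) (hpos : ∀ n, 0 < μ (A n)) :
    ∃ f : Lp X ∞ μ, ∀ g : Lp X ∞ μ,
      (∃ g₀ : Ω → X, (Set.range g₀).Finite ∧ ⇑g =ᵐ[μ] g₀) → (1 : ℝ) / 4 ≤ ‖f - g‖ := by
  obtain ⟨f, hf⟩ := simple_functions_not_dense_Linfty_general μ ℝ X hX A hmeas hdisj hpos
  exact ⟨f, fun g hg => le_trans (by norm_num) (hf g hg)⟩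
end
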